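/- arXiv:2509.02300 — 2 statements merged into one kernel-verified Lean document; each statement's English description precedes it below -/
import Mathlib

section
/- Let Y be a finite group, X₁ ⊴ Y a normal subgroup and X₂ ≤ Y a subgroup with Y = X₁X₂. Assume θ₁ ∈ Irr(X₁) is Y-invariant (i.e. fixed by the conjugation action of Y on Irr(X₁)), and θ₂ ∈ Irr(X₂) is such that the restriction of θ₂ to X₁ ∩ X₂ is irreducible and coincides with the restriction of θ₁ to X₁ ∩ X₂. Then there exists a unique character θ ∈ Irr(Y) which extends both θ₁ and θ₂. -/
open scoped Pointwise

noncomputable section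

/-- The field `ℚ^ab`, the maximal abelian extension of `ℚ`, realized inside `ℂ`
as the subfield generated by all roots of unity. -/
def Qab : IntermediateField ℚ ℂ :=
  IntermediateField.adjoin ℚ {x : ℂ | ∃ n : ℕ, 0 < n ∧ x ^ n = 1}

/-- `χ : G → ℚ^ab` is an irreducible character of `G`, i.e. the character of a
simple (finite-dimensional) representation of `G` over `ℚ^ab`; by Brauer's theorem
`ℚ^ab` is a splitting field for every finite group, so this set is `Irr(G)`. -/
def IsIrrChar (G : Type) [Group G] (χ : G → ↥Qab) : Prop :=
  ∃ V : FDRep (↥Qab) G, CategoryTheory.Simple V ∧ FDRep.character V = χ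

/-- `χ ∈ Irr_{ℓ'}(G)`: an irreducible character whose degree `χ(1)` is coprime to `ℓ`. -/
def IsIrrCharL' (ℓ : ℕ) (G : Type) [Group G] (χ : G → ↥Qab) : Prop :=
  ∃ V : FDRep (↥Qab) G, CategoryTheory.Simple V ∧ FDRep.character V = χ ∧
    Nat.Coprime (Module.finrank (↥Qab) V) ℓ

/-!
Let `ρ₁` and `ρ₂` afford `θ₁` and `θ₂`. Both restrict to the same absolutely irreducible
representation of `X₁ ⊓ X₂`, so we may assume that they agree there. For `x ∈ X₂`, invariance of
`θ₁` yields an isomorphism `S` from `ρ₁` to its conjugate by `x`. On `X₁ ⊓ X₂` the operator `ρ₂ x`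
has the same intertwining property, so by Schur's lemma it is a multiple of `S`. Hence `ρ₁` and
`ρ₂` define a representation of `X₁ ⋊ X₂`, and it factors through `Y`. Uniqueness is another
application of Schur's lemma on `X₁ ⊓ X₂`.

Schur's lemma needs Brauer's theorem that a field `K` of characteristic zero with enough roots of
unity splits every finite group `G`. Let `ρ` be irreducible with character `χ` and let `d` be the
dimension of the division algebra `End ρ`, which is the average of `χ(g) χ(g⁻¹)` over `G`. By
Clifford theory `K` splits every quasi-elementary subgroup `H`, so the endomorphism algebra of
the restriction of `ρ` to `H` is a product of matrix algebras over `K`. It contains `End ρ`, so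
`d ^ 2` divides its dimension, which is the average of `χ(h) χ(h⁻¹)` over `H`. By Solomon's
induction theorem the average over `G` is an integral combination of these, so `d ^ 2 ∣ d`.
-/

open Representation

section Extension

variable {G : Type*} [Group G] {N X : Subgroup G} [N.Normal]

theorem exists_monoidHom_extending {M : Type*} [Monoid M]
    (hNX : (N : Set G) * (X : Set G) = Set.univ) (f₁ : N →* M) (f₂ : X →* M)
    (hagree : ∀ g (hN : g ∈ N) (hX : g ∈ X), f₁ ⟨g, hN⟩ = f₂ ⟨g, hX⟩)
    (hconj : ∀ (x : X) (n : N), f₂ x * f₁ n = f₁ (MulAut.conjNormal (x : G) n) * f₂ x) :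
    ∃ f : G →* M, f.comp N.subtype = f₁ ∧ f.comp X.subtype = f₂ := by
  let φ : X →* MulAut N := MulAut.conjNormal.comp X.subtype
  let π : N ⋊[φ] X →* G :=
    SemidirectProduct.lift N.subtype X.subtype fun x => by ext n; simp [φ]
  let F : N ⋊[φ] X →* Mˣ :=
    SemidirectProduct.lift f₁.toHomUnits f₂.toHomUnits fun x => by
      refine MonoidHom.ext fun n => eq_mul_inv_of_mul_eq (Units.ext ?_)
      exact (hconj x n).symm
  have hπ : Function.Surjective π := fun g => by
    obtain ⟨n, hn, x, hx, rfl⟩ : g ∈ (N : Set G) * (X : Set G) := hNX ▸ Set.mem_univ g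
    exact ⟨⟨⟨n, hn⟩, ⟨x, hx⟩⟩, rfl⟩
  have hker : π.ker ≤ F.ker := by
    rintro ⟨n, x⟩ (h : (n : G) * x = 1)
    have hn : (n : G) = (x⁻¹ : X) := eq_inv_of_mul_eq_one_left h
    have hf : f₁ n = f₂ x⁻¹ :=
      (hagree n n.2 (hn ▸ (x⁻¹).2)).trans (congrArg f₂ (Subtype.ext hn))
    refine Units.ext ?_
    change f₁ n * f₂ x = 1
    rw [hf, ← map_mul, inv_mul_cancel, map_one]
  let f : G →* Mˣ := π.liftOfRightInverse _ (Function.rightInverse_surjInv hπ) ⟨F, hker⟩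
  have hf (s : N ⋊[φ] X) : f (π s) = F s :=
    π.liftOfRightInverse_comp_apply _ (Function.rightInverse_surjInv hπ) ⟨F, hker⟩ s
  refine ⟨(Units.coeHom M).comp f, MonoidHom.ext fun n => ?_, MonoidHom.ext fun x => ?_⟩
  · simpa [π, F] using congrArg Units.val (hf (SemidirectProduct.inl n))
  · simpa [π, F] using congrArg Units.val (hf (SemidirectProduct.inr x))

end Extension

section Schurian

variable {K G H V W : Type*} [CommSemiring K] [Monoid G] [Monoid H]
  [AddCommMonoid V] [Module K V] [AddCommMonoid W] [Module K W]

/-- A representation is Schurian if all its endomorphisms are scalars. For irreducible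
representations over a field this is absolute irreducibility. -/
def IsSchurian (ρ : Representation K G V) : Prop :=
  ∀ f : IntertwiningMap ρ ρ, ∃ c : K, ∀ v, f v = c • v

theorem IsSchurian.of_equiv {ρ : Representation K G V} {σ : Representation K G W}
    (hρ : IsSchurian ρ) (e : ρ.Equiv σ) : IsSchurian σ := by
  intro f
  obtain ⟨c, hc⟩ := hρ ((e.symm.toIntertwiningMap.comp f).comp e.toIntertwiningMap)
  refine ⟨c, fun w => ?_⟩
  simpa using congrArg e (hc (e.symm w))

/-- By Schur's lemma on the restrictions, `f` is a multiple of `e`. -/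
theorem IsSchurian.isIntertwining_of_restrict {ρ : Representation K G V}
    {σ : Representation K G W} {φ : H →* G} (hρ : IsSchurian (ρ.comp φ)) (e : ρ.Equiv σ)
    (f : V →ₗ[K] W) (hf : ∀ h v, f (ρ (φ h) v) = σ (φ h) (f v)) (g : G) (v : V) :
    f (ρ g v) = σ g (f v) := by
  obtain ⟨c, hc⟩ := hρ ⟨e.symm.toLinearMap ∘ₗ f, fun h => by
    ext v
    exact (congrArg e.symm (hf h v)).trans (e.symm.isIntertwining _ _ (φ h) (f v))⟩
  have hfe (v : V) : f v = c • e v := by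
    rw [← map_smul, ← hc v]
    exact (e.apply_symm_apply (f v)).symm
  rw [hfe, hfe, map_smul]
  exact congrArg (c • ·) (e.isIntertwining _ _ g v)

end Schurian

section Gluing

variable {K G V W : Type*} [CommSemiring K] [Group G] {N X : Subgroup G}
  [AddCommMonoid V] [Module K V] [AddCommMonoid W] [Module K W]

theorem exists_representation_extending [N.Normal]
    (hNX : (N : Set G) * (X : Set G) = Set.univ)
    (ρ₁ : Representation K N V) (ρ₂ : Representation K X W)
    (hschur : IsSchurian (ρ₁.comp (Subgroup.inclusion (inf_le_left : N ⊓ X ≤ N))))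
    (hinv : ∀ x : X, Nonempty (ρ₁.Equiv (ρ₁.comp (MulAut.conjNormal (x : G)).toMonoidHom)))
    (e : Representation.Equiv (ρ₁.comp (Subgroup.inclusion (inf_le_left : N ⊓ X ≤ N)))
      (ρ₂.comp (Subgroup.inclusion (inf_le_right : N ⊓ X ≤ X)))) :
    ∃ ρ : Representation K G V, ρ.comp N.subtype = ρ₁ ∧
      Nonempty (Representation.Equiv (ρ.comp X.subtype) ρ₂) := by
  let ρ₂' : Representation K X V :=
    (e.toLinearEquiv.symm.conjRingEquiv : Module.End K W →* Module.End K V).comp ρ₂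
  have hagree (g : G) (hN : g ∈ N) (hX : g ∈ X) : ρ₁ ⟨g, hN⟩ = ρ₂' ⟨g, hX⟩ :=
    LinearMap.ext fun v => (e.symm_apply_apply _).symm.trans
      (congrArg e.symm (e.isIntertwining _ _ ⟨g, hN, hX⟩ v))
  have hconj (x : X) (n : N) : ρ₂' x * ρ₁ n = ρ₁ (MulAut.conjNormal (x : G) n) * ρ₂' x := by
    obtain ⟨S⟩ := hinv x
    refine LinearMap.ext <|
      hschur.isIntertwining_of_restrict S (ρ₂' x) (fun ⟨d, hdN, hdX⟩ v => ?_) n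
    have hxd : (MulAut.conjNormal (x : G) ⟨d, hdN⟩ : G) = (x * ⟨d, hdX⟩ * x⁻¹ : X) := by simp
    have hρ₁ : ρ₁ (MulAut.conjNormal (x : G) ⟨d, hdN⟩) = ρ₂' (x * ⟨d, hdX⟩ * x⁻¹) :=
      (hagree _ (MulAut.conjNormal (x : G) ⟨d, hdN⟩).2 (hxd ▸ (x * ⟨d, hdX⟩ * x⁻¹).2)).trans
        (congrArg ρ₂' (Subtype.ext hxd))
    change (ρ₂' x * ρ₁ ⟨d, hdN⟩) v = (ρ₁ (MulAut.conjNormal (x : G) ⟨d, hdN⟩) * ρ₂' x) v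
    rw [hagree d hdN hdX, hρ₁, ← map_mul, ← map_mul, inv_mul_cancel_right]
  obtain ⟨ρ, hρ₁, hρ₂⟩ := exists_monoidHom_extending hNX ρ₁ ρ₂' hagree hconj
  refine ⟨ρ, hρ₁, ⟨.mk e.toLinearEquiv fun x => ?_⟩⟩
  rw [hρ₂]
  ext v
  exact e.apply_symm_apply _

theorem nonempty_equiv_of_restrict (hNX : (N : Set G) * (X : Set G) = Set.univ)
    {ρ : Representation K G V} {σ : Representation K G W}
    (hschur : IsSchurian (ρ.comp (N ⊓ X).subtype))
    (e₁ : Representation.Equiv (ρ.comp N.subtype) (σ.comp N.subtype))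
    (e₂ : Representation.Equiv (ρ.comp X.subtype) (σ.comp X.subtype)) :
    Nonempty (ρ.Equiv σ) := by
  have hN (n : N) (v : V) : e₂ (ρ n v) = σ n (e₂ v) :=
    IsSchurian.isIntertwining_of_restrict (ρ := ρ.comp N.subtype)
      (φ := Subgroup.inclusion (inf_le_left : N ⊓ X ≤ N)) hschur e₁ e₂.toLinearMap
      (fun d => e₂.isIntertwining _ _ (Subgroup.inclusion inf_le_right d)) n v
  refine ⟨.mk e₂.toLinearEquiv fun g => LinearMap.ext fun v => ?_⟩
  obtain ⟨n, hn, x, hx, rfl⟩ : g ∈ (N : Set G) * (X : Set G) := hNX ▸ Set.mem_univ g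
  change e₂ (ρ (n * x) v) = σ (n * x) (e₂ v)
  rw [map_mul, map_mul, Module.End.mul_apply, Module.End.mul_apply]
  exact (hN ⟨n, hn⟩ _).trans (congrArg (σ n) (e₂.isIntertwining _ _ ⟨x, hx⟩ v))

end Gluing

section Clifford

variable {K G V : Type*} [Field K] [Group G] [AddCommGroup V] [Module K V]

theorem exists_hasEigenvalue_of_pow_eq_one [FiniteDimensional K V] [Nontrivial V] {n : ℕ}
    [NeZero n] [HasEnoughRootsOfUnity K n] {f : Module.End K V} (hf : f ^ n = 1) :
    ∃ μ, f.HasEigenvalue μ := by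
  obtain ⟨ζ, hζ⟩ := HasEnoughRootsOfUnity.exists_primitiveRoot K n
  have hdvd : minpoly K f ∣ Polynomial.X ^ n - 1 := minpoly.dvd _ _ (by simp [hf])
  have hsplits : (minpoly K f).Splits :=
    (Polynomial.X_pow_sub_one_splits hζ).of_dvd
      (Polynomial.X_pow_sub_C_ne_zero (NeZero.pos n) 1) hdvd
  obtain ⟨μ, hμ⟩ := hsplits.exists_eval_eq_zero
    (minpoly.degree_pos (Algebra.IsIntegral.isIntegral f)).ne'
  exact ⟨μ, Module.End.hasEigenvalue_of_isRoot hμ⟩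

/-- The stabilizer of the subspace `E` under `ρ`, that is, the group of all `g` with
`ρ g E = E`. -/
def subspaceStabilizer (ρ : Representation K G V) (E : Submodule K V) : Subgroup G :=
  (MulAction.stabilizer (Module.End K V)ˣ E).comap ρ.toHomUnits

theorem mem_subspaceStabilizer {ρ : Representation K G V} {E : Submodule K V} {g : G} :
    g ∈ subspaceStabilizer ρ E ↔ E.map (ρ g) = E :=
  Iff.rfl

/-- The subspace `E` as a representation of its stabilizer. -/
def stabilizedSubspace (ρ : Representation K G V) (E : Submodule K V) :
    Subrepresentation (ρ.comp (subspaceStabilizer ρ E).subtype) where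
  toSubmodule := E
  apply_mem_toSubmodule g _ hv :=
    (mem_subspaceStabilizer.mp g.2).le (Submodule.mem_map_of_mem hv)

theorem iSup_map_eq_top {ρ : Representation K G V} [ρ.IsIrreducible]
    {W : Submodule K V} (hW : W ≠ ⊥) : ⨆ g, W.map (ρ g) = ⊤ := by
  let S : Subrepresentation ρ :=
    { toSubmodule := ⨆ g, W.map (ρ g)
      apply_mem_toSubmodule := fun h => by
        change ⨆ g, W.map (ρ g) ≤ (⨆ g, W.map (ρ g)).comap (ρ h)
        refine iSup_le fun g => Submodule.map_le_iff_le_comap.mp ?_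
        rw [← Submodule.map_comp, ← Module.End.mul_eq_comp, ← map_mul]
        exact le_iSup (fun g => W.map (ρ g)) (h * g) }
  have hWS : W ≤ S.toSubmodule :=
    le_iSup_of_le 1 (by rw [map_one]; exact (Submodule.map_id W).ge)
  have hS : S = ⊤ := (eq_bot_or_eq_top S).resolve_left fun h =>
    hW (le_bot_iff.mp (hWS.trans (congrArg Subrepresentation.toSubmodule h).le))
  exact congrArg Subrepresentation.toSubmodule hS

/-- If `W` is a nonzero invariant subspace of `E`, then `V`, the sum of the translates of `W`,
is contained in `W + R`, so that `W = E` by modularity. -/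
theorem isIrreducible_stabilizedSubspace {ρ : Representation K G V} [ρ.IsIrreducible]
    {E R : Submodule K V} (hE : E ≠ ⊥) (hER : Disjoint E R)
    (hR : ∀ g ∉ subspaceStabilizer ρ E, E.map (ρ g) ≤ R) :
    (stabilizedSubspace ρ E).toRepresentation.IsIrreducible := by
  have hsimple (W : Submodule K V) (hWE : W ≤ E) (hW : W ≠ ⊥)
      (hWT : ∀ g ∈ subspaceStabilizer ρ E, W.map (ρ g) ≤ W) : W = E := by
    have hsup : W ⊔ R = ⊤ := top_le_iff.mp <| (iSup_map_eq_top (ρ := ρ) hW).ge.trans <|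
      iSup_le fun g => by
        by_cases hg : g ∈ subspaceStabilizer ρ E
        · exact (hWT g hg).trans le_sup_left
        · exact ((Submodule.map_mono hWE).trans (hR g hg)).trans le_sup_right
    calc W = W ⊔ R ⊓ E := by rw [inf_comm, hER.eq_bot, sup_bot_eq]
      _ = (W ⊔ R) ⊓ E := (sup_inf_assoc_of_le R hWE).symm
      _ = E := by rw [hsup, top_inf_eq]
  refine { exists_pair_ne := ⟨⊥, ⊤, fun h => hE ?_⟩, eq_bot_or_eq_top := fun S => ?_ }
  · have := congrArg (fun S => S.toSubmodule.map E.subtype) h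
    exact ((Submodule.map_bot _).symm.trans (this.trans (Submodule.map_subtype_top E))).symm
  · by_cases hS : S.toSubmodule = ⊥
    · exact .inl (Subrepresentation.toSubmodule_injective hS)
    · refine .inr (Subrepresentation.toSubmodule_injective ?_)
      have hSE := hsimple (S.toSubmodule.map E.subtype) (Submodule.map_subtype_le _ _)
        (fun h => hS <|
          Submodule.map_injective_of_injective E.subtype_injective
            (h.trans (Submodule.map_bot _).symm)) fun g hg => by
          rintro _ ⟨_, ⟨v, hv, rfl⟩, rfl⟩
          exact ⟨_, S.apply_mem_toSubmodule ⟨g, hg⟩ hv, rfl⟩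
      exact Submodule.map_injective_of_injective E.subtype_injective
        (hSE.trans (Submodule.map_subtype_top E).symm)

theorem IsSchurian.of_invariant_subspace {H : Type*} [Monoid H] {φ : H →* G}
    {ρ : Representation K G V} [ρ.IsIrreducible] {E : Subrepresentation (ρ.comp φ)}
    (hE : E.toSubmodule ≠ ⊥) (hschur : IsSchurian E.toRepresentation)
    (hinv : ∀ f : IntertwiningMap ρ ρ, ∀ v ∈ E, f v ∈ E) : IsSchurian ρ := by
  intro f
  obtain ⟨c, hc⟩ := hschur
    ⟨f.toLinearMap.restrict (hinv f), fun h => by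
      ext v
      exact f.isIntertwining _ _ (φ h) v⟩
  obtain ⟨v, hvE, hv⟩ := E.toSubmodule.ne_bot_iff.mp hE
  have hfv : f v = c • v := congrArg Subtype.val (hc ⟨v, hvE⟩)
  have hzero : f - c • IntertwiningMap.id ρ = 0 :=
    (IsIrreducible.injective_or_eq_zero _).resolve_left fun hinj =>
      hv (hinj (by simp [hfv]))
  exact ⟨c, fun w => sub_eq_zero.mp (congrArg (· w) hzero)⟩

theorem map_eigenspace_le {ρ : Representation K G V} {a g : G} {z : K} {k : ℕ}
    (h : ρ (g⁻¹ * a * g) = z • ρ a ^ k) (μ : K) :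
    (Module.End.eigenspace (ρ a) μ).map (ρ g) ≤ Module.End.eigenspace (ρ a) (z * μ ^ k) := by
  rintro _ ⟨v, hv, rfl⟩
  rw [SetLike.mem_coe] at hv
  have hpow : (ρ a ^ k) v = μ ^ k • v := by
    rcases eq_or_ne v 0 with rfl | hv₀
    · simp
    · exact Module.End.HasEigenvector.pow_apply ⟨hv, hv₀⟩ k
  rw [Module.End.mem_eigenspace_iff]
  calc ρ a (ρ g v) = ρ g (ρ (g⁻¹ * a * g) v) := by
        simp only [← Module.End.mul_apply, ← map_mul, mul_assoc, mul_inv_cancel_left]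
    _ = (z * μ ^ k) • ρ g v := by rw [h, LinearMap.smul_apply, hpow, smul_smul, map_smul]

/-- Clifford: the eigenspaces of `ρ a` are permuted by `G`, so that `ρ` is induced from an
irreducible representation of the stabilizer of one of them. -/
theorem IsSchurian.of_eigenspace [FiniteDimensional K V] {ρ : Representation K G V}
    [ρ.IsIrreducible] {a : G} (ha : ∀ g, ∃ (k : ℕ) (z : K), ρ (g⁻¹ * a * g) = z • ρ a ^ k)
    {μ : K} (hμ : Module.End.HasEigenvalue (ρ a) μ)
    (hschur :
      (stabilizedSubspace ρ (Module.End.eigenspace (ρ a) μ)).toRepresentation.IsIrreducible →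
      IsSchurian (stabilizedSubspace ρ (Module.End.eigenspace (ρ a) μ)).toRepresentation) :
    IsSchurian ρ := by
  set E := Module.End.eigenspace (ρ a) μ with hE
  have hirr : (stabilizedSubspace ρ E).toRepresentation.IsIrreducible := by
    refine isIrreducible_stabilizedSubspace (R := ⨆ ν ≠ μ, Module.End.eigenspace (ρ a) ν) hμ
      (Module.End.eigenspaces_iSupIndep (ρ a) μ) fun g hg => ?_
    obtain ⟨k, z, hk⟩ := ha g
    have hgE := map_eigenspace_le hk μ
    refine hgE.trans (le_iSup₂_of_le (z * μ ^ k) (fun hν => hg ?_) le_rfl)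
    rw [hν] at hgE
    exact Submodule.eq_of_le_of_finrank_eq hgE
      (Submodule.equivMapOfInjective _ (ρ.apply_bijective g).injective E).finrank_eq.symm
  refine .of_invariant_subspace (E := stabilizedSubspace ρ E) hμ (hschur hirr)
    fun f v (hv : v ∈ E) => ?_
  change f v ∈ E
  rw [hE, Module.End.mem_eigenspace_iff] at hv ⊢
  rw [← f.isIntertwining, hv, map_smul]

end Clifford

section QuasiElementary

variable {G H : Type*} [Group G] [Group H]

/-- A group is quasi-elementary if it is an extension of a `p`-group by a cyclic group, for some
prime `p`. The quotient is expressed as a condition on powers, and the order of the cyclic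
normal subgroup is allowed to be divisible by `p`. -/
def IsQuasiElementary (G : Type*) [Group G] : Prop :=
  ∃ p : ℕ, p.Prime ∧ ∃ C : Subgroup G, C.Normal ∧ IsCyclic C ∧ ∀ g : G, ∃ n : ℕ, g ^ p ^ n ∈ C

theorem IsQuasiElementary.of_injective {f : H →* G} (hf : Function.Injective f)
    (hG : IsQuasiElementary G) : IsQuasiElementary H := by
  obtain ⟨p, hp, C, hC, hcyc, hpow⟩ := hG
  refine ⟨p, hp, C.comap f, inferInstance, ?_, fun h => ?_⟩
  · exact isCyclic_of_injective (f.subgroupComap C) fun a b hab =>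
      Subtype.ext (hf (congrArg Subtype.val hab))
  · obtain ⟨n, hn⟩ := hpow (f h)
    exact ⟨n, by rwa [Subgroup.mem_comap, map_pow]⟩

theorem IsQuasiElementary.of_surjective {f : G →* H} (hf : Function.Surjective f)
    (hG : IsQuasiElementary G) : IsQuasiElementary H := by
  obtain ⟨p, hp, C, hC, hcyc, hpow⟩ := hG
  refine ⟨p, hp, C.map f, hC.map f hf, ?_, fun h => ?_⟩
  · exact isCyclic_of_surjective (f.subgroupMap C) (f.subgroupMap_surjective C)
  · obtain ⟨g, rfl⟩ := hf h
    obtain ⟨n, hn⟩ := hpow g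
    exact ⟨n, map_pow f g _ ▸ Subgroup.mem_map_of_mem f hn⟩

theorem IsQuasiElementary.exists_normal_zpowers [Finite G] [Nontrivial G]
    (hG : IsQuasiElementary G) : ∃ g : G, g ≠ 1 ∧ (Subgroup.zpowers g).Normal := by
  obtain ⟨p, hp, C, hC, hcyc, hpow⟩ := hG
  obtain rfl | hbot := eq_or_ne C ⊥
  · have : Fact p.Prime := ⟨hp⟩
    have hpG : IsPGroup p G := fun g => by simpa using hpow g
    obtain ⟨z, hz⟩ := (nontrivial_iff_exists_ne (1 : Subgroup.center G)).mp hpG.center_nontrivial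
    refine ⟨z, fun h => hz (Subtype.ext h), ⟨fun x hx g => ?_⟩⟩
    have hxz : x ∈ Subgroup.center G := Subgroup.zpowers_le.mpr z.2 hx
    rwa [Subgroup.mem_center_iff.mp hxz g, mul_inv_cancel_right]
  · obtain ⟨c, hc⟩ := (Subgroup.isCyclic_iff_exists_zpowers_eq_top C).mp hcyc
    exact ⟨c, fun h => hbot (by rw [← hc, h, Subgroup.zpowers_one_eq_bot]), hc ▸ hC⟩

variable {K V : Type*} [Field K] [AddCommGroup V] [Module K V]

/-- The normal subgroup of elements acting as scalars. -/
def scalarSubgroup (ρ : Representation K G V) : Subgroup G :=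
  (Units.map (algebraMap K (Module.End K V) : K →* Module.End K V)).range.comap ρ.toHomUnits

theorem mem_scalarSubgroup {ρ : Representation K G V} {g : G} :
    g ∈ scalarSubgroup ρ ↔ ∃ u : Kˣ, ρ g = (u : K) • 1 := by
  refine exists_congr fun u => Units.ext_iff.trans (eq_comm.trans ?_)
  change ρ g = algebraMap K (Module.End K V) u ↔ _
  rw [Algebra.algebraMap_eq_smul_one]

instance (ρ : Representation K G V) : (scalarSubgroup ρ).Normal where
  conj_mem g hg h := by
    obtain ⟨u, hu⟩ := mem_scalarSubgroup.mp hg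
    refine mem_scalarSubgroup.mpr ⟨u, ?_⟩
    rw [map_mul, map_mul, hu, mul_smul_one, smul_mul_assoc, ← map_mul, mul_inv_cancel, map_one]

theorem IsSchurian.of_scalarSubgroup_eq_top {ρ : Representation K G V} [ρ.IsIrreducible]
    (h : scalarSubgroup ρ = ⊤) : IsSchurian ρ := by
  have : Nontrivial V := IsSimpleModule.nontrivial (MonoidAlgebra K G) ρ.asModule
  obtain ⟨v, hv⟩ := exists_ne (0 : V)
  let S : Subrepresentation ρ :=
    { toSubmodule := K ∙ v
      apply_mem_toSubmodule := fun g w hw => by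
        obtain ⟨u, hu⟩ := mem_scalarSubgroup.mp (h ▸ Subgroup.mem_top g)
        rw [hu]
        exact Submodule.smul_mem _ _ hw }
  have hS : S = ⊤ := (eq_bot_or_eq_top S).resolve_left fun hbot =>
    hv (Submodule.span_singleton_eq_bot.mp (congrArg Subrepresentation.toSubmodule hbot))
  have hspan (w : V) : ∃ c : K, c • v = w :=
    Submodule.mem_span_singleton.mp
      ((congrArg Subrepresentation.toSubmodule hS).ge Submodule.mem_top)
  intro f
  obtain ⟨c, hc⟩ := hspan (f v)
  refine ⟨c, fun w => ?_⟩
  obtain ⟨d, rfl⟩ := hspan w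
  rw [map_smul, ← hc, smul_comm]

theorem IsQuasiElementary.exists_not_mem_scalarSubgroup [Finite G] (hG : IsQuasiElementary G)
    {ρ : Representation K G V} (hρ : scalarSubgroup ρ ≠ ⊤) :
    ∃ a ∉ scalarSubgroup ρ, ∀ g, ∃ (k : ℕ) (z : K), ρ (g⁻¹ * a * g) = z • ρ a ^ k := by
  let π := QuotientGroup.mk' (scalarSubgroup ρ)
  have hπ : Function.Surjective π := QuotientGroup.mk'_surjective _
  have : Nontrivial (G ⧸ scalarSubgroup ρ) := QuotientGroup.nontrivial_iff.mpr hρ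
  obtain ⟨q, hq, hnorm⟩ := (hG.of_surjective hπ).exists_normal_zpowers
  obtain ⟨a, rfl⟩ := hπ q
  refine ⟨a, fun ha => hq ((QuotientGroup.eq_one_iff a).mpr ha), fun g => ?_⟩
  have hmem : π (g⁻¹ * a * g) ∈ Subgroup.zpowers (π a) := by
    simpa using hnorm.conj_mem (π a) (Subgroup.mem_zpowers _) (π g)⁻¹
  obtain ⟨k, hk⟩ := mem_powers_iff_mem_zpowers.mpr hmem
  have hdiv : g⁻¹ * a * g * (a ^ k)⁻¹ ∈ scalarSubgroup ρ := by
    refine (QuotientGroup.eq_one_iff _).mp ?_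
    change π (g⁻¹ * a * g * (a ^ k)⁻¹) = 1
    rw [map_mul, map_inv, map_pow]
    exact mul_inv_eq_one.mpr hk.symm
  obtain ⟨u, hu⟩ := mem_scalarSubgroup.mp hdiv
  refine ⟨k, u, ?_⟩
  calc ρ (g⁻¹ * a * g) = ρ (g⁻¹ * a * g * (a ^ k)⁻¹) * ρ (a ^ k) := by
        rw [← map_mul, inv_mul_cancel_right]
    _ = (u : K) • ρ a ^ k := by rw [hu, smul_one_mul, map_pow]

instance (H : Subgroup G) [Finite G] [HasEnoughRootsOfUnity K (Monoid.exponent G)] :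
    HasEnoughRootsOfUnity K (Monoid.exponent H) :=
  .of_dvd K (Monoid.exponent_dvd_of_monoidHom _ (Subgroup.subtype_injective _))

end QuasiElementary

theorem IsQuasiElementary.isSchurian {K G V : Type*} [Field K] [Group G] [Finite G]
    [AddCommGroup V] [Module K V] [FiniteDimensional K V] (hG : IsQuasiElementary G)
    [HasEnoughRootsOfUnity K (Monoid.exponent G)] (ρ : Representation K G V) [ρ.IsIrreducible] :
    IsSchurian ρ := by
  obtain ⟨n, hn⟩ : ∃ n, Module.finrank K V = n := ⟨_, rfl⟩
  induction n using Nat.strong_induction_on generalizing G V with | _ n ih =>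
  subst hn
  by_cases hρ : scalarSubgroup ρ = ⊤
  · exact .of_scalarSubgroup_eq_top hρ
  obtain ⟨a, ha, hconj⟩ := hG.exists_not_mem_scalarSubgroup hρ
  have : Nontrivial V := IsSimpleModule.nontrivial (MonoidAlgebra K G) ρ.asModule
  obtain ⟨μ, hμ⟩ := exists_hasEigenvalue_of_pow_eq_one (K := K) (n := Monoid.exponent G)
    (f := ρ a) (by rw [← map_pow, Monoid.pow_exponent_eq_one, map_one])
  refine .of_eigenspace hconj hμ fun hirr => ?_
  set E := Module.End.eigenspace (ρ a) μ
  have hE : E ≠ ⊤ := fun hE => by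
    have hscalar (v : V) : ρ a v = μ • v :=
      Module.End.mem_eigenspace_iff.mp (hE.ge Submodule.mem_top)
    have hμ₀ : μ ≠ 0 := by
      rintro rfl
      obtain ⟨v, hv⟩ := exists_ne (0 : V)
      exact hv ((ρ.apply_bijective a).injective (by rw [hscalar, zero_smul, map_zero]))
    exact ha (mem_scalarSubgroup.mpr ⟨.mk0 μ hμ₀, LinearMap.ext hscalar⟩)
  exact ih _ (Submodule.finrank_lt hE) (hG.of_injective (Subgroup.subtype_injective _)) _ rfl

section Solomon

open MulAction Subgroup

theorem card_fixedBy_modEq_card_fixedBy_pow {G S : Type*} [Group G] [MulAction G S] [Finite S]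
    {p : ℕ} (hp : p.Prime) (g : G) (n : ℕ) :
    Nat.card (fixedBy S (g ^ p ^ n)) ≡ Nat.card (fixedBy S g) [MOD p] := by
  classical
  have := Fact.mk hp
  have := Fintype.ofFinite S
  let f : Function.End (fixedBy S (g ^ p ^ n)) := fun s =>
    ⟨g • s, by simpa only [mem_fixedBy, smul_smul, pow_mul_comm', ← mul_smul] using
      (by rw [← pow_succ, pow_succ', mul_smul, s.2] : (g ^ p ^ n * g) • (s : S) = g • s)⟩
  have hf (k : ℕ) (s) : ((f ^ k) s : S) = g ^ k • (s : S) := by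
    induction k with
    | zero => rw [pow_zero, pow_zero, one_smul]; rfl
    | succ k ih => rw [pow_succ', pow_succ', mul_smul, ← ih]; rfl
  have hfixed : Function.fixedPoints f ≃ fixedBy S g :=
    { toFun s := ⟨s, congrArg Subtype.val s.2⟩
      invFun s := ⟨⟨s, (stabilizer G (s : S)).pow_mem s.2 _⟩, Subtype.ext s.2⟩
      left_inv _ := rfl
      right_inv _ := rfl }
  have hmod := Equiv.Perm.card_fixedPoints_modEq (f := f) (p := p) (n := n)
    (funext fun s => Subtype.ext ((hf _ s).trans s.2))
  rwa [← Nat.card_eq_fintype_card, ← Nat.card_eq_fintype_card, Nat.card_congr hfixed] at hmod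

variable {G : Type*} [Group G]

theorem exists_le_normalizer_not_dvd_relIndex [Finite G] {p : ℕ} (hp : p.Prime)
    (C : Subgroup G) : ∃ H : Subgroup G, C ≤ H ∧ H ≤ normalizer (C : Set G) ∧
      (∀ h ∈ H, ∃ n : ℕ, h ^ p ^ n ∈ C) ∧ ¬ p ∣ H.relIndex (normalizer (C : Set G)) := by
  have := Fact.mk hp
  let N := normalizer (C : Set G)
  let π := QuotientGroup.mk' (C.subgroupOf N)
  obtain ⟨P⟩ : Nonempty (Sylow p (N ⧸ C.subgroupOf N)) := inferInstance
  refine ⟨((P : Subgroup _).comap π).map N.subtype, fun c hc => ?_, map_subtype_le _, ?_, ?_⟩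
  · have hcP : π ⟨c, le_normalizer hc⟩ = 1 := (QuotientGroup.eq_one_iff _).mpr hc
    exact ⟨_, mem_comap.mpr (hcP ▸ one_mem P), rfl⟩
  · rintro _ ⟨n, hn, rfl⟩
    obtain ⟨k, hk⟩ := P.isPGroup' ⟨π n, hn⟩
    exact ⟨k, (QuotientGroup.eq_one_iff (n ^ p ^ k)).mp (congrArg Subtype.val hk)⟩
  · rw [relIndex, subgroupOf, comap_map_eq_self_of_injective N.subtype_injective,
      index_comap_of_surjective _ (QuotientGroup.mk'_surjective _)]
    exact P.not_dvd_index

theorem card_orbit_one_quotient (N H : Subgroup G) :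
    Nat.card (orbit N ((1 : G) : G ⧸ H)) = H.relIndex N := by
  have hstab : stabilizer N ((1 : G) : G ⧸ H) = H.subgroupOf N :=
    congrArg (subgroupOf · N) (stabilizer_quotient H)
  rw [relIndex, ← hstab, index_stabilizer, Nat.card_coe_set_eq]

/-- A coset `xH` is fixed by `c` if and only if `x⁻¹ c x ∈ H`, which forces `x⁻¹ c x` to lie in
the subgroup generated by `c`, because its order is prime to `p`. -/
theorem fixedBy_quotient_eq_orbit_normalizer [Finite G] {p : ℕ} {c : G}
    (hc : (orderOf c).Coprime p) {H : Subgroup G} (hcH : zpowers c ≤ H)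
    (hpow : ∀ h ∈ H, ∃ n : ℕ, h ^ p ^ n ∈ zpowers c) :
    fixedBy (G ⧸ H) c = orbit (normalizer (zpowers c : Set G)) ((1 : G) : G ⧸ H) := by
  ext q
  obtain ⟨x, rfl⟩ := QuotientGroup.mk_surjective q
  have hfixed : (x : G ⧸ H) ∈ fixedBy (G ⧸ H) c ↔ x⁻¹ * c * x ∈ H := by
    rw [mem_fixedBy, eq_comm, MulAction.Quotient.smul_coe, QuotientGroup.eq, smul_eq_mul, mul_assoc]
  refine ⟨fun hx => ⟨⟨x, ?_⟩, congrArg _ (mul_one x)⟩, ?_⟩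
  · rw [hfixed] at hx
    have hord : orderOf (x⁻¹ * c * x) = orderOf c := by
      simpa using (MulAut.conj x⁻¹).orderOf_eq c
    obtain ⟨k, hk⟩ := hpow _ hx
    have hmem : x⁻¹ * c * x ∈ zpowers c := zpowers_le.mpr hk <|
      mem_zpowers_pow_iff.mpr (hord ▸ (hc.pow_right k).symm)
    rw [← inv_mem_iff]
    refine mem_normalizer_fintype fun y hy => ?_
    have hmap : (zpowers c).map (MulAut.conj x⁻¹).toMonoidHom ≤ zpowers c := by
      rw [MonoidHom.map_zpowers, zpowers_le]
      simpa using hmem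
    exact hmap (mem_map_of_mem _ hy)
  · rintro ⟨⟨n, hn⟩, hnx⟩
    rw [← hnx]
    have hconj := (mem_normalizer_iff.mp (inv_mem hn) c).mp (mem_zpowers c)
    rw [inv_inv] at hconj
    change c • ((n * 1 : G) : G ⧸ H) = ((n * 1 : G) : G ⧸ H)
    rw [mul_one, eq_comm, MulAction.Quotient.smul_coe, QuotientGroup.eq, smul_eq_mul, ← mul_assoc]
    exact hcH hconj

theorem exists_isQuasiElementary_not_dvd_card_fixedBy [Finite G] {p : ℕ} (hp : p.Prime) (g : G) :
    ∃ H : Subgroup G, IsQuasiElementary H ∧ ¬ p ∣ Nat.card (fixedBy (G ⧸ H) g) := by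
  obtain ⟨a, m, hm, ho⟩ := Nat.exists_eq_pow_mul_and_not_dvd (orderOf_pos g).ne' p hp.ne_one
  have hc : (orderOf (g ^ p ^ a)).Coprime p := by
    rw [orderOf_pow_of_dvd (pow_ne_zero _ hp.ne_zero) (ho ▸ Nat.dvd_mul_right _ _), ho,
      Nat.mul_div_cancel_left _ (Nat.pow_pos hp.pos)]
    exact ((Nat.Prime.coprime_iff_not_dvd hp).mpr hm).symm
  obtain ⟨H, hcH, hHN, hpow, hdvd⟩ :=
    exists_le_normalizer_not_dvd_relIndex hp (zpowers (g ^ p ^ a))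
  refine ⟨H, ⟨p, hp, (zpowers (g ^ p ^ a)).subgroupOf H, ?_, ?_, fun h => hpow h h.2⟩, ?_⟩
  · exact (normal_subgroupOf_iff_le_normalizer hcH).mpr hHN
  · exact isCyclic_of_surjective (subgroupOfEquivOfLe hcH).symm (MulEquiv.surjective _)
  · rwa [← Nat.ModEq.dvd_iff (card_fixedBy_modEq_card_fixedBy_pow hp g a) dvd_rfl,
      fixedBy_quotient_eq_orbit_normalizer hc hcH hpow, card_orbit_one_quotient]

end Solomon

section IntegerValuedFunctions

theorem exists_mem_apply_eq_one {ι : Type*} {A : AddSubgroup (ι → ℤ)} {i : ι}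
    (h : ∀ p : ℕ, p.Prime → ∃ f ∈ A, ¬ (p : ℤ) ∣ f i) : ∃ f ∈ A, f i = 1 := by
  obtain ⟨n, hn⟩ := Int.subgroup_cyclic (A.map (Pi.evalAddMonoidHom (fun _ : ι => ℤ) i))
  have hdvd {f : ι → ℤ} (hf : f ∈ A) : n ∣ f i := by
    rw [← Int.mem_zmultiples_iff, AddSubgroup.zmultiples_eq_closure, ← hn]
    exact AddSubgroup.mem_map_of_mem _ hf
  have hunit : IsUnit n := Int.isUnit_iff_natAbs_eq.mpr <| by
    by_contra hne
    obtain ⟨p, hp, hpn⟩ := Nat.exists_prime_and_dvd hne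
    obtain ⟨f, hf, hpf⟩ := h p hp
    exact hpf ((Int.natCast_dvd.mpr hpn).trans (hdvd hf))
  have hone : (1 : ℤ) ∈ A.map (Pi.evalAddMonoidHom (fun _ : ι => ℤ) i) := by
    rw [hn, ← AddSubgroup.zmultiples_eq_closure, Int.mem_zmultiples_iff]
    exact hunit.dvd
  exact hone

theorem one_mem_of_forall_exists_apply_eq_one {ι R : Type*} [Finite ι] [CommRing R]
    {A : NonUnitalSubring (ι → R)} (h : ∀ i, ∃ f ∈ A, f i = 1) : (1 : ι → R) ∈ A := by
  have := Fintype.ofFinite ι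
  choose f hfA hf using h
  have hmem (s : Finset ι) : 1 - ∏ i ∈ s, (1 - f i) ∈ A := by
    classical
    induction s using Finset.induction_on with
    | empty => simp
    | insert i s hi ih =>
      have hsplit : 1 - ∏ j ∈ insert i s, (1 - f j) =
          f i + (1 - ∏ j ∈ s, (1 - f j)) - f i * (1 - ∏ j ∈ s, (1 - f j)) := by
        rw [Finset.prod_insert hi]
        ring
      exact hsplit ▸ sub_mem (add_mem (hfA i) ih) (mul_mem (hfA i) ih)
  have hzero : ∏ i, (1 - f i) = 0 := funext fun j => by
    rw [Finset.prod_apply]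
    exact Finset.prod_eq_zero (Finset.mem_univ j) (by simp [hf])
  simpa [hzero] using hmem Finset.univ

end IntegerValuedFunctions

section PermutationCharacters

open MulAction

universe u

/-- The permutation character of a `G`-set, as an integer-valued function. -/
def permChar (G : Type*) [Group G] (S : Type*) [MulAction G S] (g : G) : ℤ :=
  Nat.card (fixedBy S g)

/-- The permutation characters of the finite `G`-sets with quasi-elementary point stabilizers.
The product of two such characters is the character of the product of the `G`-sets. -/
def quasiElementaryPermChars (G : Type u) [Group G] : Subsemigroup (G → ℤ) where
  carrier := {f | ∃ (S : Type u) (_ : MulAction G S), Finite S ∧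
    (∀ s : S, IsQuasiElementary (stabilizer G s)) ∧ f = permChar G S}
  mul_mem' := by
    rintro _ _ ⟨S, _, _, hS, rfl⟩ ⟨T, _, _, -, rfl⟩
    refine ⟨S × T, inferInstance, inferInstance, fun ⟨s, t⟩ => ?_, funext fun g => ?_⟩
    · have hle : stabilizer G (s, t) ≤ stabilizer G s := fun g hg => congrArg Prod.fst hg
      exact (hS s).of_injective (Subgroup.inclusion_injective hle)
    · have hprod : fixedBy (S × T) g = fixedBy S g ×ˢ fixedBy T g :=
        Set.ext fun _ => Prod.ext_iff
      simp only [Pi.mul_apply, permChar, hprod, Nat.card_coe_set_eq, Set.ncard_prod, Nat.cast_mul]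

theorem permChar_quotient_mem {G : Type u} [Group G] [Finite G] {H : Subgroup G}
    (hH : IsQuasiElementary H) : permChar G (G ⧸ H) ∈ quasiElementaryPermChars G := by
  refine ⟨G ⧸ H, inferInstance, inferInstance, fun s => ?_, rfl⟩
  obtain ⟨g, hg⟩ := exists_smul_eq G s ((1 : G) : G ⧸ H)
  have e := (stabilizerEquivStabilizer hg.symm).trans
    (MulEquiv.subgroupCongr (stabilizer_quotient H))
  exact hH.of_injective (f := e.toMonoidHom) e.injective

/-- Solomon's induction theorem. -/
theorem one_mem_closure_quasiElementaryPermChars (G : Type u) [Group G] [Finite G] :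
    (1 : G → ℤ) ∈ AddSubgroup.closure (quasiElementaryPermChars G : Set (G → ℤ)) := by
  let A := NonUnitalSubring.closure (quasiElementaryPermChars G : Set (G → ℤ))
  have hA : (1 : G → ℤ) ∈ A := one_mem_of_forall_exists_apply_eq_one fun g =>
    exists_mem_apply_eq_one (A := A.toAddSubgroup) fun p hp => by
      obtain ⟨H, hH, hpH⟩ := exists_isQuasiElementary_not_dvd_card_fixedBy hp g
      exact ⟨_, NonUnitalSubring.subset_closure (permChar_quotient_mem hH),
        fun h => hpH (Int.natCast_dvd_natCast.mp h)⟩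
  rwa [NonUnitalSubring.mem_closure_iff, Subsemigroup.closure_eq] at hA

end PermutationCharacters

section Average

open MulAction

universe u

variable {G : Type u} [Group G] {K : Type*} [Field K]

/-- The average value of `φ` on a finite type `G`. -/
def groupAverage {G : Type*} (φ : G → K) : K :=
  (Nat.card G : K)⁻¹ * ∑ᶠ g, φ g

theorem finsum_stabilizer_smul {S : Type*} [MulAction G S] {φ : G → K}
    (hφ : ∀ g h, φ (h * g * h⁻¹) = φ g) (g : G) (s : S) :
    ∑ᶠ h : stabilizer G (g • s), φ h = ∑ᶠ h : stabilizer G s, φ h :=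
  (finsum_eq_of_bijective _ (stabilizerEquivStabilizer (rfl : g • s = g • s)).bijective
    fun h => (hφ h g).symm).symm

variable [Finite G]

theorem finsum_permChar_mul (S : Type*) [MulAction G S] [Finite S] (φ : G → K) :
    ∑ᶠ g, (permChar G S g : K) * φ g = ∑ᶠ s : S, ∑ᶠ h : stabilizer G s, φ h := by
  classical
  have := Fintype.ofFinite G
  have := Fintype.ofFinite S
  simp only [finsum_eq_sum_of_fintype]
  have hfixed (g : G) : (permChar G S g : K) * φ g = ∑ s : S, if g • s = s then φ g else 0 := by
    rw [← Finset.sum_filter, Finset.sum_const, nsmul_eq_mul, permChar, Int.cast_natCast,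
      ← Fintype.card_subtype, Nat.card_eq_fintype_card]
    rfl
  have hstab (s : S) : ∑ h : stabilizer G s, φ h = ∑ g, if g • s = s then φ g else 0 := by
    rw [← Finset.sum_filter]
    exact (Finset.sum_subtype _ (by simp) _).symm
  simp only [hfixed, hstab]
  exact Finset.sum_comm

variable [CharZero K]

theorem groupAverage_permChar_mul {S : Type*} [MulAction G S] [Finite S] {φ : G → K}
    (hφ : ∀ g h, φ (h * g * h⁻¹) = φ g) :
    groupAverage (fun g => (permChar G S g : K) * φ g) =
      ∑ᶠ ω : orbitRel.Quotient G S, groupAverage fun h : stabilizer G ω.out => φ h := by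
  have := Fintype.ofFinite S
  have := Fintype.ofFinite (orbitRel.Quotient G S)
  have (ω : orbitRel.Quotient G S) := Fintype.ofFinite ω.orbit
  have hcard (ω : orbitRel.Quotient G S) :
      Nat.card G = Nat.card ω.orbit * Nat.card (stabilizer G ω.out) := by
    rw [orbitRel.Quotient.orbit_eq_orbit_out _ Quotient.out_eq', Nat.card_coe_set_eq,
      ← index_stabilizer, Subgroup.index_mul_card]
  have horbit (ω : orbitRel.Quotient G S) :
      ∑ s : ω.orbit, ∑ᶠ h : stabilizer G (s : S), φ h =
        Nat.card ω.orbit * ∑ᶠ h : stabilizer G ω.out, φ h := by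
    rw [← nsmul_eq_mul, Nat.card_eq_fintype_card]
    refine Finset.sum_eq_card_nsmul fun ⟨s, hs⟩ _ => ?_
    rw [orbitRel.Quotient.orbit_eq_orbit_out _ Quotient.out_eq'] at hs
    obtain ⟨g, rfl⟩ := hs
    exact finsum_stabilizer_smul hφ g _
  calc groupAverage (fun g => (permChar G S g : K) * φ g)
      = (Nat.card G : K)⁻¹ * ∑ s : S, ∑ᶠ h : stabilizer G s, φ h := by
        rw [groupAverage, finsum_permChar_mul, finsum_eq_sum_of_fintype]
    _ = ∑ ω : orbitRel.Quotient G S,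
          (Nat.card G : K)⁻¹ * (Nat.card ω.orbit * ∑ᶠ h : stabilizer G ω.out, φ h) := by
        rw [← Finset.mul_sum, ← (selfEquivSigmaOrbits' G S).symm.sum_comp, Fintype.sum_sigma]
        exact congrArg _ (Finset.sum_congr rfl fun ω _ => horbit ω)
    _ = ∑ ω : orbitRel.Quotient G S, groupAverage fun h : stabilizer G ω.out => φ h := by
        refine Finset.sum_congr rfl fun ω _ => ?_
        have hne : (Nat.card ω.orbit : K) ≠ 0 :=
          Nat.cast_ne_zero.mpr (left_ne_zero_of_mul (hcard ω ▸ Nat.card_pos.ne'))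
        rw [groupAverage, hcard ω, Nat.cast_mul]
        field_simp
    _ = _ := (finsum_eq_sum_of_fintype _).symm

theorem groupAverage_mem_of_isQuasiElementary {φ : G → K}
    (hφ : ∀ g h, φ (h * g * h⁻¹) = φ g) {D : AddSubgroup K}
    (hD : ∀ H : Subgroup G, IsQuasiElementary H → groupAverage (fun h : H => φ h) ∈ D) :
    groupAverage φ ∈ D := by
  have := Fintype.ofFinite G
  let avg : (G → ℤ) →+ K :=
    { toFun f := groupAverage fun g => (f g : K) * φ g
      map_zero' := by simp [groupAverage]
      map_add' f₁ f₂ := by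
        simp [groupAverage, finsum_eq_sum_of_fintype, add_mul, mul_add, Finset.sum_add_distrib] }
  have hle : AddSubgroup.closure (quasiElementaryPermChars G : Set (G → ℤ)) ≤ D.comap avg := by
    rw [AddSubgroup.closure_le]
    rintro _ ⟨S, _, _, hS, rfl⟩
    change groupAverage (fun g => (permChar G S g : K) * φ g) ∈ D
    rw [groupAverage_permChar_mul hφ]
    exact finsum_induction (· ∈ D) D.zero_mem (fun _ _ => D.add_mem) fun ω => hD _ (hS _)
  simpa [avg] using hle (one_mem_closure_quasiElementaryPermChars G)

end Average

section Brauer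

theorem finrank_dvd_finrank_of_algHom {K E M : Type*} [Field K] [DivisionRing E] [Algebra K E]
    [AddCommGroup M] [Module K M] (φ : E →ₐ[K] Module.End K M) :
    Module.finrank K E ∣ Module.finrank K M := by
  let _ : Module E M := Module.compHom M φ.toRingHom
  have hsmul (e : E) (m : M) : e • m = φ e m := rfl
  have : IsScalarTower K E M := ⟨fun k e m => by simp [hsmul]⟩
  exact ⟨_, (Module.finrank_mul_finrank K E M).symm⟩

theorem finrank_sq_dvd_finrank_of_algEquiv_pi_matrix {K E A ι : Type*} [Finite ι] {d : ι → ℕ}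
    [Field K] [DivisionRing E] [Algebra K E] [Ring A] [Algebra K A] (φ : E →ₐ[K] A)
    (e : A ≃ₐ[K] ∀ i, Matrix (Fin (d i)) (Fin (d i)) K) :
    Module.finrank K E ^ 2 ∣ Module.finrank K A := by
  have := Fintype.ofFinite ι
  have hd (i : ι) : Module.finrank K E ∣ d i := by
    simpa using finrank_dvd_finrank_of_algHom <|
      Matrix.toLinAlgEquiv'.toAlgHom.comp ((Pi.evalAlgHom K _ i).comp (e.toAlgHom.comp φ))
  rw [e.toLinearEquiv.finrank_eq, Module.finrank_pi_fintype]
  refine Finset.dvd_sum fun i _ => ?_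
  simpa [Module.finrank_matrix, sq] using pow_dvd_pow_of_dvd (hd i) 2

variable {K G : Type*} [Field K] [Group G]

open scoped MonoidAlgebra

theorem isIrreducible_ofModule' (M : Type*) [AddCommGroup M] [Module K M] [Module K[G] M]
    [IsScalarTower K K[G] M] [IsSimpleModule K[G] M] :
    (ofModule' (k := K) (G := G) M).IsIrreducible := by
  let e : (ofModule' (k := K) (G := G) M).asModule ≃ₗ[K[G]] M :=
    { (ofModule' (k := K) (G := G) M).asModuleEquiv.toAddEquiv with
      map_smul' := fun r m => by
        refine (asModuleEquiv_map_smul _ r m).trans ?_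
        rw [asAlgebraHom, ofModule', Equiv.apply_symm_apply]
        rfl }
  exact (irreducible_iff_isSimpleModule_asModule _).mpr (IsSimpleModule.congr e)

theorem IsQuasiElementary.bijective_algebraMap_end [Finite G] (hG : IsQuasiElementary G)
    [HasEnoughRootsOfUnity K (Monoid.exponent G)] (M : Type*) [AddCommGroup M] [Module K M]
    [Module K[G] M] [IsScalarTower K K[G] M] [FiniteDimensional K M] [IsSimpleModule K[G] M] :
    Function.Bijective (algebraMap K (Module.End K[G] M)) := by
  have : Nontrivial M := IsSimpleModule.nontrivial K[G] M
  have := isIrreducible_ofModule' (K := K) (G := G) M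
  refine ⟨(algebraMap K _).injective, fun f => ?_⟩
  obtain ⟨c, hc⟩ := hG.isSchurian (ofModule' (k := K) (G := G) M)
    ⟨f.restrictScalars K, fun g => LinearMap.ext fun m => map_smul f (MonoidAlgebra.of K G g) m⟩
  exact ⟨c, LinearMap.ext fun m => (hc m).symm⟩

theorem IsQuasiElementary.finrank_sq_dvd_finrank_end [CharZero K] [Finite G]
    (hG : IsQuasiElementary G) [HasEnoughRootsOfUnity K (Monoid.exponent G)] {M E : Type*}
    [AddCommGroup M] [Module K M] [Module K[G] M] [IsScalarTower K K[G] M] [FiniteDimensional K M]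
    [DivisionRing E] [Algebra K E] (φ : E →ₐ[K] Module.End K[G] M) :
    Module.finrank K E ^ 2 ∣ Module.finrank K (Module.End K[G] M) := by
  have : NeZero (Nat.card G : K) := ⟨Nat.cast_ne_zero.mpr Nat.card_pos.ne'⟩
  have : Module.Finite K[G] M := .of_restrictScalars_finite K K[G] M
  obtain ⟨n, S, d, hS, -, ⟨e⟩⟩ := IsSemisimpleModule.exists_end_algEquiv_pi_matrix_end K K[G] M
  have (i : Fin n) : FiniteDimensional K (S i) :=
    .of_injective ((S i).subtype.restrictScalars K) Subtype.val_injective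
  let endEquiv (i : Fin n) : K ≃ₐ[K] Module.End K[G] (S i) :=
    .ofBijective (Algebra.ofId K _) (hG.bijective_algebraMap_end (S i))
  exact finrank_sq_dvd_finrank_of_algEquiv_pi_matrix φ <|
    e.trans (AlgEquiv.piCongrRight fun i => (endEquiv i).symm.mapMatrix)

/-- Endomorphisms of a representation of `G`, viewed as endomorphisms of its restriction along
`f : H →* G`. -/
def restrictEnd {H V : Type*} [Group H] [AddCommGroup V] [Module K V] (ρ : Representation K G V)
    (f : H →* G) : IntertwiningMap ρ ρ →ₐ[K]
      IntertwiningMap (σ := (ρ.comp f : Representation K H V)) (ρ := ρ.comp f) where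
  toFun T := ⟨T.toLinearMap, fun h => T.isIntertwining' (f h)⟩
  map_one' := rfl
  map_mul' _ _ := rfl
  map_zero' := rfl
  map_add' _ _ := rfl
  commutes' _ := rfl

theorem IsQuasiElementary.finrank_sq_dvd_finrank_restrict [CharZero K] {V : Type*}
    [AddCommGroup V] [Module K V] [FiniteDimensional K V] (ρ : Representation K G V)
    [ρ.IsIrreducible] {H : Type*} [Group H] [Finite H] (hH : IsQuasiElementary H)
    [HasEnoughRootsOfUnity K (Monoid.exponent H)] (f : H →* G) :
    Module.finrank K (IntertwiningMap ρ ρ) ^ 2 ∣ Module.finrank K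
      (IntertwiningMap (σ := (ρ.comp f : Representation K H V)) (ρ := ρ.comp f)) := by
  classical
  let _ : DivisionRing (Module.End K[G] ρ.asModule) := Module.End.instDivisionRing
  let endEquiv := IntertwiningMap.equivAlgEnd (ρ := ρ)
  let endEquiv' := IntertwiningMap.equivAlgEnd (ρ := (ρ.comp f : Representation K H V))
  rw [endEquiv.toLinearEquiv.finrank_eq, endEquiv'.toLinearEquiv.finrank_eq]
  exact hH.finrank_sq_dvd_finrank_end
    (endEquiv'.toAlgHom.comp ((restrictEnd ρ f).comp endEquiv.symm.toAlgHom))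

theorem IsSchurian.of_finrank_eq_one {V : Type*} [AddCommGroup V] [Module K V]
    {ρ : Representation K G V}
    (hρ : Module.finrank K (IntertwiningMap ρ ρ) = 1) : IsSchurian ρ := by
  intro f
  have : Nontrivial (IntertwiningMap ρ ρ) := Module.nontrivial_of_finrank_eq_succ hρ
  obtain ⟨c, rfl⟩ := (finrank_eq_one_iff_of_nonzero' 1 one_ne_zero).mp hρ f
  exact ⟨c, fun v => rfl⟩

theorem groupAverage_char_mul_char_inv [CharZero K] [Finite G] {V W : Type*}
    [AddCommGroup V] [Module K V] [FiniteDimensional K V]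
    [AddCommGroup W] [Module K W] [FiniteDimensional K W]
    (ρ : Representation K G V) (σ : Representation K G W) :
    groupAverage (fun g => σ.character g * ρ.character g⁻¹) =
      Module.finrank K (IntertwiningMap ρ σ) := by
  have := Fintype.ofFinite G
  have : Invertible (Nat.card G : K) :=
    invertibleOfNonzero (Nat.cast_ne_zero.mpr Nat.card_pos.ne')
  rw [groupAverage, finsum_eq_sum_of_fintype, card_inv_mul_sum_char_mul_char_eq_finrank]

theorem eq_one_of_natCast_mem_zmultiples_sq {R : Type*} [CommRing R] [CharZero R] {d : ℕ}
    (hd : d ≠ 0) (h : (d : R) ∈ AddSubgroup.zmultiples ((d ^ 2 : ℕ) : R)) : d = 1 := by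
  obtain ⟨t, ht⟩ := AddSubgroup.mem_zmultiples_iff.mp h
  rw [zsmul_eq_mul, mul_comm] at ht
  have hdvd : ((d ^ 2 : ℕ) : ℤ) ∣ d := ⟨t, by exact_mod_cast ht.symm⟩
  have hle : d ^ 2 ≤ d := Nat.le_of_dvd hd.bot_lt (Int.natCast_dvd_natCast.mp hdvd)
  nlinarith [hd.bot_lt]

/-- Brauer's theorem on splitting fields. -/
theorem isSchurian_of_isIrreducible [CharZero K] [Finite G]
    [HasEnoughRootsOfUnity K (Monoid.exponent G)] {V : Type*} [AddCommGroup V] [Module K V]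
    [FiniteDimensional K V] (ρ : Representation K G V) [ρ.IsIrreducible] : IsSchurian ρ := by
  set d := Module.finrank K (IntertwiningMap ρ ρ) with hd
  have : Nontrivial V := IsSimpleModule.nontrivial K[G] ρ.asModule
  have : Nontrivial (IntertwiningMap ρ ρ) :=
    ⟨1, 0, fun h => one_ne_zero (congrArg IntertwiningMap.toLinearMap h)⟩
  have hpos : d ≠ 0 := Module.finrank_pos.ne'
  have hmem : (d : K) ∈ AddSubgroup.zmultiples ((d ^ 2 : ℕ) : K) := by
    rw [hd, ← groupAverage_char_mul_char_inv]
    refine groupAverage_mem_of_isQuasiElementary (fun g h => ?_) fun H hH => ?_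
    · have hinv : (h * g * h⁻¹)⁻¹ = h * g⁻¹ * h⁻¹ := by group
      rw [hinv, char_conj, char_conj]
    · let σ : Representation K H V := ρ.comp H.subtype
      obtain ⟨t, ht⟩ : d ^ 2 ∣ Module.finrank K (IntertwiningMap σ σ) :=
        hH.finrank_sq_dvd_finrank_restrict ρ H.subtype
      refine AddSubgroup.mem_zmultiples_iff.mpr ⟨t, ?_⟩
      refine Eq.trans ?_ (groupAverage_char_mul_char_inv σ σ).symm
      rw [ht, zsmul_eq_mul, Int.cast_natCast, Nat.cast_mul, mul_comm]
  exact .of_finrank_eq_one (eq_one_of_natCast_mem_zmultiples_sq hpos hmem)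

end Brauer

section Characters

variable {K G H V W : Type*} [Field K] [Group G] [Group H]
  [AddCommGroup V] [Module K V] [AddCommGroup W] [Module K W]

theorem nonempty_equiv_of_character_eq [CharZero K] [Finite G] [FiniteDimensional K V]
    [FiniteDimensional K W] (ρ : Representation K G V) (σ : Representation K G W)
    [ρ.IsIrreducible] (h : ρ.character = σ.character) : Nonempty (ρ.Equiv σ) := by
  have : Nontrivial V := IsSimpleModule.nontrivial (MonoidAlgebra K G) ρ.asModule
  have : Nontrivial (IntertwiningMap ρ ρ) :=
    ⟨1, 0, fun h => one_ne_zero (congrArg IntertwiningMap.toLinearMap h)⟩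
  have hEnd : Module.finrank K (IntertwiningMap ρ ρ) = Module.finrank K (IntertwiningMap ρ σ) := by
    apply Nat.cast_injective (R := K)
    rw [← groupAverage_char_mul_char_inv, ← groupAverage_char_mul_char_inv, h]
  have : Nontrivial (IntertwiningMap ρ σ) :=
    Module.nontrivial_of_finrank_pos (hEnd ▸ Module.finrank_pos)
  obtain ⟨f, hf⟩ := exists_ne (0 : IntertwiningMap ρ σ)
  have hinj : Function.Injective f := (IsIrreducible.injective_or_eq_zero f).resolve_right hf
  have hdim : Module.finrank K V = Module.finrank K W := by
    apply Nat.cast_injective (R := K)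
    rw [← ρ.char_one, ← σ.char_one, h]
  exact ⟨f.ofBijective ⟨hinj, (LinearMap.injective_iff_surjective_of_finrank_eq_finrank
    (f := f.toLinearMap) hdim).mp hinj⟩⟩

theorem isIrreducible_of_comp (ρ : Representation K G V) (f : H →* G)
    (hf : IsIrreducible (ρ.comp f : Representation K H V)) : ρ.IsIrreducible := by
  let restrict (S : Subrepresentation ρ) : Subrepresentation (ρ.comp f : Representation K H V) :=
    ⟨S.toSubmodule, fun h => S.apply_mem_toSubmodule (f h)⟩
  have hrestrict : Function.Injective restrict := fun S T h =>
    Subrepresentation.toSubmodule_injective congr(($h).toSubmodule)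
  have hne : (⊥ : Subrepresentation ρ) ≠ ⊤ := fun h => bot_ne_top (congrArg restrict h)
  exact
    { exists_pair_ne := ⟨⊥, ⊤, hne⟩
      eq_bot_or_eq_top := fun S => (hf.eq_bot_or_eq_top (restrict S)).imp
        (fun h => hrestrict h) fun h => hrestrict h }

theorem isIrreducible_of_equiv {ρ : Representation K G V} {σ : Representation K G W}
    [ρ.IsIrreducible] (e : ρ.Equiv σ) : σ.IsIrreducible := by
  let eMod : ρ.asModule ≃ₗ[MonoidAlgebra K G] σ.asModule :=
    .ofBijective (IntertwiningMap.equivLinearMapAsModule ρ σ e.toIntertwiningMap)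
      e.toLinearEquiv.bijective
  exact (irreducible_iff_isSimpleModule_asModule σ).mpr (IsSimpleModule.congr eMod.symm)

theorem isIrreducible_of_character_eq [CharZero K] [Finite G] [FiniteDimensional K V]
    [FiniteDimensional K W] (ρ : Representation K G V) (σ : Representation K G W)
    [ρ.IsIrreducible] (h : ρ.character = σ.character) : σ.IsIrreducible :=
  let ⟨e⟩ := nonempty_equiv_of_character_eq ρ σ h
  isIrreducible_of_equiv e

end Characters

section Simple

open CategoryTheory

variable {K G : Type*} [Field K] [Group G]

/-- The inclusion of a subrepresentation as a morphism of finite-dimensional representations. -/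
def subrepresentationι (V : FDRep K G) (S : Subrepresentation V.ρ) :
    FDRep.of S.toRepresentation ⟶ V :=
  FDRep.forget₂HomLinearEquiv _ _ (Rep.ofHom ⟨S.toSubmodule.subtype, fun _ => rfl⟩)

instance (V : FDRep K G) (S : Subrepresentation V.ρ) : Mono (subrepresentationι V S) :=
  (forget₂ (FDRep K G) (Rep K G)).mono_of_mono_map <|
    (Rep.mono_iff_injective _).mpr Subtype.val_injective

theorem subrepresentationι_eq_zero_iff (V : FDRep K G) (S : Subrepresentation V.ρ) :
    subrepresentationι V S = 0 ↔ S = ⊥ := by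
  refine (LinearEquiv.map_eq_zero_iff _).trans ⟨fun h => le_bot_iff.mp fun v hv => ?_, ?_⟩
  · exact congr(Rep.Hom.hom $h (⟨v, hv⟩ : S.toSubmodule))
  · rintro rfl
    exact Rep.hom_ext <| IntertwiningMap.ext <| LinearMap.ext fun v => v.2

theorem isIso_subrepresentationι_iff (V : FDRep K G) (S : Subrepresentation V.ρ) :
    IsIso (subrepresentationι V S) ↔ S = ⊤ := by
  let F := forget₂ (FDRep K G) (Rep K G)
  have hι : Function.Surjective (F.map (subrepresentationι V S)).hom ↔ S = ⊤ :=
    ⟨fun h => top_le_iff.mp fun v _ => by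
      obtain ⟨w, rfl⟩ := h v
      exact w.2, by
      rintro rfl v
      exact ⟨⟨v, trivial⟩, rfl⟩⟩
  rw [← isIso_iff_of_reflects_iso _ F, isIso_iff_mono_and_epi, Rep.epi_iff_surjective, hι]
  exact and_iff_right inferInstance

theorem simple_iff_isIrreducible (V : FDRep K G) : Simple V ↔ IsIrreducible V.ρ := by
  constructor
  · intro hV
    have htop (S : Subrepresentation V.ρ) : S = ⊤ ↔ S ≠ ⊥ := by
      rw [← isIso_subrepresentationι_iff, Simple.mono_isIso_iff_nonzero, ne_eq,
        subrepresentationι_eq_zero_iff]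
    exact
      { exists_pair_ne := ⟨⊤, ⊥, (htop ⊤).mp rfl⟩
        eq_bot_or_eq_top := fun S => or_iff_not_imp_left.mpr (htop S).mpr }
  · intro hV
    let F := forget₂ (FDRep K G) (Rep K G) ⋙ Rep.toModuleMonoidAlgebra
    have : Simple (F.obj V) :=
      simple_iff_isSimpleModule.mpr ((irreducible_iff_isSimpleModule_asModule _).mp hV)
    exact Functor.simple_of_simple_obj F V

end Simple

section CharacterGluing

variable {K G V W : Type*} [Field K] [CharZero K] [Group G] [Finite G] {N X : Subgroup G}
  [HasEnoughRootsOfUnity K (Monoid.exponent G)]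
  [AddCommGroup V] [Module K V] [FiniteDimensional K V]
  [AddCommGroup W] [Module K W] [FiniteDimensional K W]

theorem exists_representation_extending_of_character_eq [N.Normal]
    (hNX : (N : Set G) * (X : Set G) = Set.univ)
    (ρ₁ : Representation K N V) [ρ₁.IsIrreducible]
    (hinv : ∀ (x : X) (n : N), ρ₁.character (MulAut.conjNormal (x : G) n) = ρ₁.character n)
    (ρ₂ : Representation K X W)
    [IsIrreducible (ρ₂.comp (Subgroup.inclusion (inf_le_right : N ⊓ X ≤ X)) :
      Representation K ↥(N ⊓ X) W)]
    (h : ∀ g (hN : g ∈ N) (hX : g ∈ X), ρ₂.character ⟨g, hX⟩ = ρ₁.character ⟨g, hN⟩) :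
    ∃ ρ : Representation K G V, ρ.comp N.subtype = ρ₁ ∧
      ∀ x : X, ρ.character x = ρ₂.character x := by
  let σ₁ : Representation K ↥(N ⊓ X) V := ρ₁.comp (Subgroup.inclusion inf_le_left)
  let σ₂ : Representation K ↥(N ⊓ X) W := ρ₂.comp (Subgroup.inclusion inf_le_right)
  obtain ⟨e⟩ : Nonempty (σ₂.Equiv σ₁) :=
    nonempty_equiv_of_character_eq σ₂ σ₁ (funext fun d => h d d.2.1 d.2.2)
  have hschur : IsSchurian σ₁ := (isSchurian_of_isIrreducible σ₂).of_equiv e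
  obtain ⟨ρ, hρ₁, ⟨e₂⟩⟩ := exists_representation_extending hNX ρ₁ ρ₂ hschur
    (fun x => nonempty_equiv_of_character_eq _ _ (funext fun n => (hinv x n).symm)) e.symm
  exact ⟨ρ, hρ₁, fun x => congrFun (char_iso e₂) x⟩

theorem character_eq_of_restrict (hNX : (N : Set G) * (X : Set G) = Set.univ)
    (ρ : Representation K G V) (σ : Representation K G W)
    (hρ : IsIrreducible (ρ.comp (N ⊓ X).subtype : Representation K ↥(N ⊓ X) V))
    (hN : ∀ n : N, ρ.character n = σ.character n) (hX : ∀ x : X, ρ.character x = σ.character x) :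
    ρ.character = σ.character := by
  have : Representation.IsIrreducible (ρ.comp N.subtype : Representation K N V) :=
    isIrreducible_of_comp _ (Subgroup.inclusion (inf_le_left : N ⊓ X ≤ N)) hρ
  have : Representation.IsIrreducible (ρ.comp X.subtype : Representation K X V) :=
    isIrreducible_of_comp _ (Subgroup.inclusion (inf_le_right : N ⊓ X ≤ X)) hρ
  obtain ⟨e₁⟩ := nonempty_equiv_of_character_eq (ρ.comp N.subtype) (σ.comp N.subtype) (funext hN)
  obtain ⟨e₂⟩ := nonempty_equiv_of_character_eq (ρ.comp X.subtype) (σ.comp X.subtype) (funext hX)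
  obtain ⟨e⟩ := nonempty_equiv_of_restrict hNX
    (isSchurian_of_isIrreducible (ρ.comp (N ⊓ X).subtype)) e₁ e₂
  exact char_iso e

end CharacterGluing

/-- `χ` is the character of a simple finite-dimensional representation of `G` over `K`, so that
`IsIrrChar` is the case `K = Qab`. -/
def IsIrrCharOver (K : Type*) (G : Type*) [Field K] [Group G] (χ : G → K) : Prop :=
  ∃ V : FDRep K G, CategoryTheory.Simple V ∧ V.character = χ

theorem gluing_extensions_general {K Y : Type*} [Field K] [CharZero K] [Group Y] [Finite Y]
    [HasEnoughRootsOfUnity K (Monoid.exponent Y)] (X₁ X₂ : Subgroup Y) (hX₁ : X₁.Normal)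
    (hprod : (X₁ : Set Y) * (X₂ : Set Y) = Set.univ)
    (θ₁ : X₁ → K) (hθ₁ : IsIrrCharOver K X₁ θ₁)
    (hinv : ∀ (y : Y) (x : Y) (hx : x ∈ X₁),
      θ₁ ⟨y * x * y⁻¹, hX₁.conj_mem x hx y⟩ = θ₁ ⟨x, hx⟩)
    (θ₂ : X₂ → K) (hθ₂ : IsIrrCharOver K X₂ θ₂)
    (hres : IsIrrCharOver K ↥(X₁ ⊓ X₂) fun x => θ₂ ⟨x, x.2.2⟩)
    (heq : ∀ x : ↥(X₁ ⊓ X₂), θ₂ ⟨x, x.2.2⟩ = θ₁ ⟨x, x.2.1⟩) :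
    ∃! θ : Y → K, IsIrrCharOver K Y θ ∧
      (∀ (x : Y) (hx : x ∈ X₁), θ x = θ₁ ⟨x, hx⟩) ∧
      (∀ (x : Y) (hx : x ∈ X₂), θ x = θ₂ ⟨x, hx⟩) := by
  obtain ⟨⟨V₁, hV₁, rfl⟩, ⟨V₂, -, rfl⟩, ⟨V₀, hV₀, hχ₀⟩⟩ := And.intro hθ₁ (And.intro hθ₂ hres)
  rw [simple_iff_isIrreducible] at hV₀ hV₁
  have := isIrreducible_of_character_eq V₀.ρ
    (V₂.ρ.comp (Subgroup.inclusion (inf_le_right : X₁ ⊓ X₂ ≤ X₂))) hχ₀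
  obtain ⟨ρ, hρ₁, hρ₂⟩ := exists_representation_extending_of_character_eq hprod V₁.ρ
    (fun x n => hinv x n n.2) V₂.ρ fun x h₁ h₂ => heq ⟨x, h₁, h₂⟩
  have hN (x : Y) (hx : x ∈ X₁) : ρ.character x = V₁.character ⟨x, hx⟩ :=
    congr(character $hρ₁ ⟨x, hx⟩)
  have hρ : ρ.IsIrreducible := isIrreducible_of_comp ρ X₁.subtype (hρ₁ ▸ hV₁)
  refine ⟨ρ.character, ⟨⟨FDRep.of ρ, (simple_iff_isIrreducible _).mpr hρ, rfl⟩, hN,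
    fun x hx => hρ₂ ⟨x, hx⟩⟩, ?_⟩
  rintro _ ⟨⟨V, -, rfl⟩, hVN, hVX⟩
  have hρres : IsIrreducible (ρ.comp (X₁ ⊓ X₂).subtype) :=
    isIrreducible_of_character_eq V₀.ρ _ <| hχ₀.trans <| funext fun x => (hρ₂ ⟨x, x.2.2⟩).symm
  exact (character_eq_of_restrict hprod ρ V.ρ hρres (fun x => (hN x x.2).trans (hVN x x.2).symm)
    fun x => (hρ₂ x).trans (hVX x x.2).symm).symm

instance (n : ℕ) [NeZero n] : HasEnoughRootsOfUnity Qab n where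
  prim := by
    have h := Complex.isPrimitiveRoot_exp n (NeZero.ne n)
    refine ⟨⟨_, IntermediateField.subset_adjoin ℚ _ ⟨n, NeZero.pos n, h.pow_eq_one⟩⟩, ?_⟩
    exact IsPrimitiveRoot.of_map_of_injective (f := Qab.val) h Qab.val.injective
  cyc := inferInstance

/-- **Lemma 3.1** (gluing extensions). Let `X₁ ⊴ Y`, `X₂ ≤ Y` with `Y = X₁X₂`.
If `θ₁ ∈ Irr(X₁)` is `Y`-invariant and `θ₂ ∈ Irr(X₂)` restricts irreducibly to
`X₁ ∩ X₂`, where the restrictions of `θ₁` and `θ₂` to `X₁ ∩ X₂` coincide, then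
there is a unique `θ ∈ Irr(Y)` extending both `θ₁` and `θ₂`. -/
theorem gluing_extensions (Y : Type) [Group Y] [Fintype Y]
    (X₁ X₂ : Subgroup Y) (hX₁ : X₁.Normal)
    (hprod : (X₁ : Set Y) * (X₂ : Set Y) = Set.univ)
    (θ₁ : ↥X₁ → ↥Qab) (hθ₁ : IsIrrChar (↥X₁) θ₁)
    (hinv : ∀ (y : Y) (x : Y) (hx : x ∈ X₁),
      θ₁ ⟨y * x * y⁻¹, hX₁.conj_mem x hx y⟩ = θ₁ ⟨x, hx⟩)
    (θ₂ : ↥X₂ → ↥Qab) (hθ₂ : IsIrrChar (↥X₂) θ₂)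
    (hres : IsIrrChar (↥(X₁ ⊓ X₂))
      (fun x => θ₂ ⟨(x : Y), (Subgroup.mem_inf.mp x.2).2⟩))
    (heq : ∀ x : ↥(X₁ ⊓ X₂),
      θ₂ ⟨(x : Y), (Subgroup.mem_inf.mp x.2).2⟩ =
        θ₁ ⟨(x : Y), (Subgroup.mem_inf.mp x.2).1⟩) :
    ∃! θ : Y → ↥Qab, IsIrrChar Y θ ∧
      (∀ (x : Y) (hx : x ∈ X₁), θ x = θ₁ ⟨x, hx⟩) ∧
      (∀ (x : Y) (hx : x ∈ X₂), θ x = θ₂ ⟨x, hx⟩) :=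
  gluing_extensions_general X₁ X₂ hX₁ hprod θ₁ hθ₁ hinv θ₂ hθ₂ hres heq
end
end

section
/- Let ℓ be a prime, let X ⊴ Y be finite groups, and suppose there exists a subgroup K ≤ Y such that KX/X is a Sylow ℓ-subgroup of Y/X and K ∩ X is an ℓ'-group (i.e. has order coprime to ℓ). Then there exist a Sylow ℓ-subgroup D̂ of Y and a subgroup E₀ ≤ K with E₀ a Sylow ℓ-subgroup of K such that, setting D := D̂ ∩ X, one has: D is a Sylow ℓ-subgroup of X, D ⊴ D̂, D ∩ E₀ = 1, and D̂ = D E₀; that is, D̂ = D ⋊ E₀. -/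
open scoped Pointwise

noncomputable section

/-!
A Sylow `ℓ`-subgroup `E₀` of `K` covers the whole `ℓ`-group `KX/X`: the image of its normalizer has
index both prime to `ℓ` and a power of `ℓ`, and the normalizer is `E₀` itself up to elements of
order prime to `ℓ`, which die in `KX/X`. Now extend `E₀` to a Sylow `ℓ`-subgroup `D̂` of `Y`. By
maximality of `KX/X` both `D̂` and `E₀` have image `KX/X`, so `D̂ ≤ X E₀`, and Dedekind's modular
law gives `D̂ = (D̂ ∩ X) E₀`. Some Sylow `ℓ`-subgroup of `Y` meets `X` in a Sylow `ℓ`-subgroup of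
`X`, and by conjugacy so does `D̂`, because `X` is normal.
-/

section

variable {p : ℕ} [Fact p.Prime] {G H : Type*} [Group G] [Group H]

theorem map_eq_range_of_not_dvd_index {f : G →* H} (hf : IsPGroup p f.range)
    {N : Subgroup G} (hN : ¬ p ∣ N.index) : N.map f = f.range := by
  have hdvd : (N.map f).relIndex f.range ∣ N.index := by
    rw [← Subgroup.index_comap, Subgroup.comap_map_eq]
    exact Subgroup.index_dvd_of_le le_sup_left
  have : (N.map f).IsFiniteRelIndex f.range :=
    ⟨fun h ↦ hN ((dvd_zero p).trans (h ▸ hdvd))⟩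
  obtain ⟨n, hn⟩ : ∃ n, (N.map f).relIndex f.range = p ^ n := hf.index _
  have hn_zero : n = 0 := by
    by_contra h
    exact hN ((dvd_pow_self p h).trans (hn ▸ hdvd))
  rw [hn_zero, pow_zero, Subgroup.relIndex_eq_one] at hn
  exact le_antisymm (Subgroup.map_le_range f N) hn

theorem exists_coprime_pow_mem_sylow_of_mem_normalizer (P : Sylow p G) {g : G}
    (hg : g ∈ Subgroup.normalizer P) (hfin : IsOfFinOrder g) :
    ∃ n, n.Coprime p ∧ g ^ n ∈ P := by
  obtain ⟨k, n, hn, horder⟩ := Nat.exists_eq_pow_mul_and_not_dvd hfin.orderOf_pos.ne' p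
    (Fact.out : p.Prime).ne_one
  refine ⟨n, ((Fact.out : p.Prime).coprime_iff_not_dvd.mpr hn).symm, ?_⟩
  have hpow : orderOf (g ^ n) ∣ p ^ k := orderOf_dvd_of_pow_eq_one <| by
    rw [← pow_mul, mul_comm, ← horder, pow_orderOf_eq_one]
  have hpgroup : IsPGroup p (Subgroup.zpowers (g ^ n)) :=
    .of_card_dvd_pow (Nat.card_zpowers (g ^ n) ▸ hpow)
  have hmem : g ^ n ∈ Subgroup.zpowers (g ^ n) ⊓ Subgroup.normalizer P :=
    ⟨Subgroup.mem_zpowers _, pow_mem hg n⟩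
  rw [hpgroup.inf_normalizer_sylow] at hmem
  exact hmem.2

theorem sylow_map_eq_range [Finite (Sylow p G)] {f : G →* H}
    (hker : IsMulTorsion f.ker) (hrange : IsPGroup p f.range) (P : Sylow p G) :
    (P : Subgroup G).map f = f.range := by
  have htorsion : IsMulTorsion G := .extension_closed f.ker_rangeRestrict.symm
    (hrange.isOfFinOrder (Fact.out : p.Prime).ne_zero) hker
  have hnormalizer : (Subgroup.normalizer (P : Set G)).map f = f.range :=
    map_eq_range_of_not_dvd_index hrange (P.card_eq_index_normalizer ▸ not_dvd_card_sylow p G)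
  refine le_antisymm (Subgroup.map_le_range f P) fun h hh ↦ ?_
  obtain ⟨g, hg, rfl⟩ := hnormalizer ▸ hh
  obtain ⟨n, hn, hgn⟩ := exists_coprime_pow_mem_sylow_of_mem_normalizer P hg (htorsion g)
  have hcoprime : n.Coprime (orderOf (f g)) := by
    simpa only [Subgroup.orderOf_mk] using (hrange.orderOf_coprime hn.symm ⟨f g, hh⟩).symm
  have hpow : f g ^ n ∈ (P : Subgroup G).map f := ⟨g ^ n, hgn, map_pow f g n⟩
  exact Subgroup.zpowers_le.mpr hpow (mem_zpowers_pow_iff.mpr hcoprime)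

theorem sylow_map_subtype_map_eq_map {f : G →* H} {K : Subgroup G} [Finite (Sylow p K)]
    (hker : IsMulTorsion ↥(K ⊓ f.ker)) (hmap : IsPGroup p (K.map f)) (T : Sylow p K) :
    ((T : Subgroup K).map K.subtype).map f = K.map f := by
  have hrange : (f.comp K.subtype).range = K.map f := by
    rw [MonoidHom.range_comp, Subgroup.range_subtype]
  have hker_comp : IsMulTorsion (f.comp K.subtype).ker := fun x ↦
    have hfin : IsOfFinOrder (x : G) :=
      (K ⊓ f.ker).subtype.isOfFinOrder (hker ⟨x, x.1.2, x.2⟩)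
    Submonoid.isOfFinOrder_coe.mp (Submonoid.isOfFinOrder_coe.mp hfin)
  rw [Subgroup.map_map, sylow_map_eq_range hker_comp (hrange ▸ hmap) T, hrange]

theorem exists_sylow_eq_subgroupOf_normal [Finite (Sylow p G)] (P : Sylow p G)
    (N : Subgroup G) [N.Normal] :
    ∃ Q : Sylow p N, (Q : Subgroup N) = (P : Subgroup G).subgroupOf N := by
  obtain ⟨Q⟩ : Nonempty (Sylow p N) := inferInstance
  obtain ⟨R, hR⟩ := Q.exists_comap_subtype_eq
  obtain ⟨g, rfl⟩ := MulAction.exists_smul_eq G R P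
  refine ⟨MulAut.conjNormal (H := N) g • Q, ?_⟩
  ext x
  rw [Sylow.pointwise_smul_def, ← hR, Subgroup.mem_pointwise_smul_iff_inv_smul_mem,
    Subgroup.mem_subgroupOf, Sylow.coe_subgroup_smul, Subgroup.mem_pointwise_smul_iff_inv_smul_mem]
  simp [Subgroup.mem_subgroupOf, MulAut.smul_def]

theorem inf_ker_mul_eq_of_map_le_map {f : G →* H} {P E : Subgroup G} (hEP : E ≤ P)
    (hmap : P.map f ≤ E.map f) : ((P ⊓ f.ker : Subgroup G) : Set G) * (E : Set G) = P := by
  rw [Subgroup.map_le_map_iff, sup_comm] at hmap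
  rw [Subgroup.inf_mul_assoc P f.ker E hEP, ← Subgroup.normal_mul f.ker E, Set.inter_eq_left]
  exact hmap

end

theorem split_sylow_general {ℓ : ℕ} [Fact ℓ.Prime] {Y : Type*} [Group Y] [Finite (Sylow ℓ Y)]
    (X K : Subgroup Y) [X.Normal]
    (hKX : ∃ S : Sylow ℓ (Y ⧸ X), (S : Subgroup (Y ⧸ X)) = K.map (QuotientGroup.mk' X))
    (hKint : Nat.Coprime (Nat.card ↥(K ⊓ X)) ℓ) :
    ∃ Dhat E₀ : Subgroup Y,
      (∃ S : Sylow ℓ Y, (S : Subgroup Y) = Dhat) ∧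
      E₀ ≤ K ∧
      (∃ T : Sylow ℓ ↥K, (T : Subgroup ↥K) = E₀.subgroupOf K) ∧
      (∃ S' : Sylow ℓ ↥X, (S' : Subgroup ↥X) = (Dhat ⊓ X).subgroupOf X) ∧
      ((Dhat ⊓ X).subgroupOf Dhat).Normal ∧
      (Dhat ⊓ X) ⊓ E₀ = ⊥ ∧
      ((Dhat ⊓ X : Subgroup Y) : Set Y) * (E₀ : Set Y) = (Dhat : Set Y) := by
  obtain ⟨S, hS⟩ := hKX
  obtain ⟨T⟩ : Nonempty (Sylow ℓ K) := inferInstance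
  set E := (T : Subgroup K).map K.subtype
  have hEp : IsPGroup ℓ E := T.isPGroup'.map _
  have hEK : E ≤ K := Subgroup.map_subtype_le _
  have hET : E.subgroupOf K = T := Subgroup.comap_map_eq_self_of_injective K.subtype_injective _
  have : Finite ↥(K ⊓ X) := Nat.finite_of_card_ne_zero fun h ↦
    (Fact.out : ℓ.Prime).ne_one ((Nat.coprime_zero_left ℓ).mp (h ▸ hKint))
  have hEmap : E.map (QuotientGroup.mk' X) = S := by
    rw [hS]
    refine sylow_map_subtype_map_eq_map ?_ (hS ▸ S.isPGroup') T
    rw [QuotientGroup.ker_mk']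
    exact isMulTorsion_of_finite
  obtain ⟨P, hEP⟩ := hEp.exists_le_sylow
  have hPmap : (P : Subgroup Y).map (QuotientGroup.mk' X) = S :=
    S.is_maximal' (P.isPGroup'.map _) (hEmap ▸ Subgroup.map_mono hEP)
  refine ⟨P, E, ⟨P, rfl⟩, hEK, ⟨T, hET.symm⟩, ?_, ?_, ?_, ?_⟩
  · rw [Subgroup.inf_subgroupOf_right]
    exact exists_sylow_eq_subgroupOf_normal P X
  · rw [Subgroup.inf_subgroupOf_left]
    infer_instance
  · have hdisjoint : Disjoint (K ⊓ X) E := IsPGroup.disjoint_of_coprime .card hEp hKint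
    have hle : (P : Subgroup Y) ⊓ X ⊓ E ≤ K ⊓ X := fun y hy ↦ ⟨hEK hy.2, hy.1.2⟩
    exact le_bot_iff.mp (hdisjoint hle inf_le_right)
  · simpa only [QuotientGroup.ker_mk'] using
      inf_ker_mul_eq_of_map_le_map hEP (hPmap.trans hEmap.symm).le

/-- **Remark 3.3** (split Sylow subgroup). Let `X ⊴ Y` and `K ≤ Y` with
`KX/X ∈ Syl_ℓ(Y/X)` and `K ∩ X` an `ℓ'`-group. Then there are a Sylow
`ℓ`-subgroup `D̂` of `Y` and a subgroup `E₀ ≤ K` which is a Sylow `ℓ`-subgroup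
of `K`, such that for `D := D̂ ∩ X`: `D` is a Sylow `ℓ`-subgroup of `X`,
`D ⊴ D̂`, `D ∩ E₀ = 1` and `D̂ = D E₀`; that is, `D̂ = D ⋊ E₀`. -/
theorem split_sylow (ℓ : ℕ) (hℓ : ℓ.Prime) (Y : Type) [Group Y] [Fintype Y]
    (X K : Subgroup Y) [hX : X.Normal]
    (hKX : ∃ S : Sylow ℓ (Y ⧸ X),
      (S : Subgroup (Y ⧸ X)) = K.map (QuotientGroup.mk' X))
    (hKint : Nat.Coprime (Nat.card ↥(K ⊓ X)) ℓ) :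
    ∃ Dhat E₀ : Subgroup Y,
      (∃ S : Sylow ℓ Y, (S : Subgroup Y) = Dhat) ∧
      E₀ ≤ K ∧
      (∃ T : Sylow ℓ ↥K, (T : Subgroup ↥K) = E₀.subgroupOf K) ∧
      (∃ S' : Sylow ℓ ↥X, (S' : Subgroup ↥X) = (Dhat ⊓ X).subgroupOf X) ∧
      ((Dhat ⊓ X).subgroupOf Dhat).Normal ∧
      (Dhat ⊓ X) ⊓ E₀ = ⊥ ∧
      ((Dhat ⊓ X : Subgroup Y) : Set Y) * (E₀ : Set Y) = (Dhat : Set Y) := by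
  have : Fact ℓ.Prime := ⟨hℓ⟩
  exact split_sylow_general X K hKX hKint
end
end
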